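/- arXiv:2605.30813 — 2 statements merged into one kernel-verified Lean document; each statement's English description precedes it below -/
import Mathlib

section
/- Canonicity of output tokens: for every string s, every token t occurring as an element of the list 𝕋_D(s) is canonical, i.e., satisfies 𝕋_D(t) = [t]. -/
/-!
Common BPE formalization preamble.

A token is a (nonempty) string over the alphabet `α`, modeled as `List α`.
A merge rule is a pair of tokens; a dictionary is an ordered list of rules
(earlier rules have strictly higher priority).
-/

namespace BPE

variable {α : Type*} [DecidableEq α]

/-- A token is a string over the alphabet (nonemptiness is imposed by hypotheses). -/
abbrev Token (α : Type*) := List α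

/-- A merge rule is an ordered pair of tokens. -/
abbrev Rule (α : Type*) := Token α × Token α

/-- A dictionary is an ordered list of merge rules; earlier = higher priority. -/
abbrev Dict (α : Type*) := List (Rule α)

/-- Apply a single merge rule to a token list, scanning left to right and replacing
each adjacent occurrence of `r.1` followed by `r.2` by the concatenated token,
resuming the scan after the newly formed token (no overlaps). -/
def applyRule (r : Rule α) : List (Token α) → List (Token α)
  | [] => []
  | [t] => [t]
  | t :: u :: rest =>
      if t = r.1 ∧ u = r.2 then (r.1 ++ r.2) :: applyRule r rest
      else t :: applyRule r (u :: rest)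

/-- `φ₀(s)`: the list of single-character tokens of `s`. -/
def phi0 (s : List α) : List (Token α) := s.map (fun c => [c])

/-- `φ_k(s)`: the token list after applying the first `k` rules of `D` to `s`. -/
def phiK (D : Dict α) (k : ℕ) (s : List α) : List (Token α) :=
  (D.take k).foldl (fun φ r => applyRule r φ) (phi0 s)

/-- The BPE tokenization `𝕋_D(s)`. -/
def tokenize (D : Dict α) (s : List α) : List (Token α) :=
  phiK D D.length s

/-- Detokenization `π`: concatenation of the tokens. -/
def detok (φ : List (Token α)) : List α := φ.flatten

/-- A dictionary is valid if all rule components are genuine (nonempty) tokens. -/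
def ValidDict (D : Dict α) : Prop := ∀ r ∈ D, r.1 ≠ [] ∧ r.2 ≠ []

/-- A token `t` is canonical if `𝕋_D(t) = [t]`. -/
def IsCanonical (D : Dict α) (t : Token α) : Prop := tokenize D t = [t]

/-- The last token `θ(s)`: last element of `𝕋_D(s)` (defaulting to `[]`). -/
def theta (D : Dict α) (s : List α) : Token α := (tokenize D s).getLastD []

/-- `j` (0-based) is the index of the canonical rule of `t`:
`φ_j(t)` has exactly two tokens and `φ_{j+1}(t) = [t]`. -/
def IsCanonicalRuleIdx (D : Dict α) (t : Token α) (j : ℕ) : Prop :=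
  j < D.length ∧ (phiK D j t).length = 2 ∧ phiK D (j + 1) t = [t]

open Classical in
/-- The (0-based) index of the canonical rule of `t` (junk value `0` if none exists). -/
noncomputable def canonIdx (D : Dict α) (t : Token α) : ℕ :=
  if h : ∃ j, IsCanonicalRuleIdx D t j then h.choose else 0

/-- Predecessor `pre(t)`: first token of the two-token stage `φ_{j-1}(t)`. -/
noncomputable def pre (D : Dict α) (t : Token α) : Token α :=
  (phiK D (canonIdx D t) t).headD []

/-- Successor `suc(t)`: second token of the two-token stage `φ_{j-1}(t)`. -/
noncomputable def suc (D : Dict α) (t : Token α) : Token α :=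
  (phiK D (canonIdx D t) t).getLastD []

/-- `InPath D x a` means `a ∈ P(x)`: `a` is obtained from `x` by iterating `suc`,
i.e. `a` lies on the ancestor path of `x` in the Successor Forest. -/
def InPath (D : Dict α) (x a : Token α) : Prop :=
  ∃ n : ℕ, (suc D)^[n] x = a

/-- `s` with the suffix `u` removed. -/
def dropSuffix (s u : List α) : List α := s.take (s.length - u.length)

/-- The Prefix Last-Token Condition of the canonical suffix token `t`
with respect to the string `s`. Atomic tokens satisfy it by definition;
a non-atomic token must satisfy Reachability and Priority dominance. -/
def PLTC (D : Dict α) (s t : Token α) : Prop :=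
  t.length = 1 ∨
    (1 < t.length ∧
      InPath D (theta D (dropSuffix s (suc D t))) (pre D t) ∧
      (theta D (dropSuffix s (suc D t)) ≠ pre D t →
        ∀ u : Token α, 1 < u.length → IsCanonical D u → suc D u = pre D t →
          InPath D (theta D (dropSuffix s (suc D t))) u →
          canonIdx D t < canonIdx D u))


theorem applyRule_split (r : Rule α) (A : List (Token α)) :
    ∀ L1 L2, applyRule r A = L1 ++ L2 →
      ∃ A1 A2, A = A1 ++ A2 ∧ applyRule r A1 = L1 ∧ applyRule r A2 = L2 := by
  induction A using applyRule.induct (r := r) with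
  | case1 =>
    intro L1 L2 h
    simp only [applyRule] at h
    obtain ⟨rfl, rfl⟩ := List.append_eq_nil_iff.1 h.symm
    exact ⟨[], [], rfl, rfl, rfl⟩
  | case2 t =>
    intro L1 L2 h
    cases L1 with
    | nil => exact ⟨[], [t], rfl, rfl, by simpa using h⟩
    | cons a L1 =>
      simp only [applyRule, List.cons_append, List.cons.injEq] at h
      obtain ⟨rfl, h⟩ := h
      obtain ⟨rfl, rfl⟩ := List.append_eq_nil_iff.1 h.symm
      exact ⟨[t], [], rfl, rfl, rfl⟩
  | case3 t u rest hc ih =>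
    intro L1 L2 h
    cases L1 with
    | nil => exact ⟨[], _, rfl, rfl, by simpa using h⟩
    | cons a L1 =>
      rw [applyRule, if_pos hc, List.cons_append, List.cons.injEq] at h
      obtain ⟨rfl, h⟩ := h
      obtain ⟨A1, A2, rfl, rfl, rfl⟩ := ih _ _ h
      exact ⟨t :: u :: A1, A2, rfl, by rw [applyRule, if_pos hc], rfl⟩
  | case4 t u rest hc ih =>
    intro L1 L2 h
    cases L1 with
    | nil => exact ⟨[], _, rfl, rfl, by simpa using h⟩
    | cons a L1 =>
      rw [applyRule, if_neg hc, List.cons_append, List.cons.injEq] at h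
      obtain ⟨rfl, h⟩ := h
      obtain ⟨A1, A2, hA, rfl, rfl⟩ := ih _ _ h
      refine ⟨t :: A1, A2, by rw [hA]; rfl, ?_, rfl⟩
      cases A1 with
      | nil => simp [applyRule]
      | cons b A1 =>
        simp only [List.cons_append, List.cons.injEq] at hA
        obtain ⟨rfl, -⟩ := hA
        rw [applyRule, if_neg hc]

theorem foldl_split (D : Dict α) :
    ∀ (A L1 L2 : List (Token α)), D.foldl (fun φ r => applyRule r φ) A = L1 ++ L2 →
      ∃ A1 A2, A = A1 ++ A2 ∧ D.foldl (fun φ r => applyRule r φ) A1 = L1 ∧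
        D.foldl (fun φ r => applyRule r φ) A2 = L2 := by
  induction D with
  | nil => intro A L1 L2 h; exact ⟨L1, L2, h, rfl, rfl⟩
  | cons r D ih =>
    intro A L1 L2 h
    obtain ⟨B1, B2, hB, h1, h2⟩ := ih _ _ _ h
    obtain ⟨A1, A2, hA, rfl, rfl⟩ := applyRule_split r A _ _ hB
    exact ⟨A1, A2, hA, h1, h2⟩

theorem flatten_applyRule (r : Rule α) (A : List (Token α)) :
    (applyRule r A).flatten = A.flatten := by
  induction A using applyRule.induct (r := r) with
  | case1 => rfl
  | case2 t => rfl
  | case3 t u rest hc ih =>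
    rw [applyRule, if_pos hc]
    simp [ih, hc.1, hc.2]
  | case4 t u rest hc ih =>
    rw [applyRule, if_neg hc, List.flatten_cons, ih]
    rfl

theorem flatten_foldl (D : Dict α) : ∀ (A : List (Token α)),
    (D.foldl (fun φ r => applyRule r φ) A).flatten = A.flatten := by
  induction D with
  | nil => intro A; rfl
  | cons r D ih => intro A; rw [List.foldl_cons, ih, flatten_applyRule]

theorem flatten_phi0 (s : List α) : (phi0 s).flatten = s := by
  induction s with
  | nil => rfl
  | cons a s ih =>
    change [a] ++ (phi0 s).flatten = _
    rw [ih]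
    rfl

theorem tokenize_split (D : Dict α) (s : List α) (L1 L2 : List (Token α))
    (h : tokenize D s = L1 ++ L2) :
    ∃ s1 s2, tokenize D s1 = L1 ∧ tokenize D s2 = L2 := by
  obtain ⟨A1, A2, hA, h1, h2⟩ := foldl_split _ _ _ _ h
  obtain ⟨s1, s2, -, rfl, rfl⟩ := List.map_eq_append_iff.1 hA
  exact ⟨s1, s2, h1, h2⟩

/-- **Canonicity of output tokens.** Every token occurring in `𝕋_D(s)` is canonical. -/
theorem output_tokens_canonical [Fintype α] (D : Dict α) (hD : ValidDict D)
    (s : List α) (t : Token α) (ht : t ∈ tokenize D s) :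
    tokenize D t = [t] := by
  obtain ⟨L1, L2, h⟩ := List.append_of_mem ht
  obtain ⟨-, s2, -, h2⟩ := tokenize_split D s _ _ h
  obtain ⟨s1, -, h1, -⟩ := tokenize_split D s2 [t] L2 h2
  have hf : (tokenize D s1).flatten = s1 := (flatten_foldl _ _).trans (flatten_phi0 s1)
  rw [h1] at hf
  have : t = s1 := by simpa using hf
  rw [this] at h1 ⊢
  exact h1

end BPE
end

section
/- Structure of the Suffix-Successor Tree: let k be a canonical token. (i) If u is a non-atomic canonical token that is a suffix of k, then suc(u) is also a canonical suffix of k. (ii) Consequently, for every canonical suffix u of k, the entire ancestor path P(u) consists of canonical suffixes of k and terminates at the unique atomic suffix of k (the single-character token formed by the last character of k); hence SufSucTree(k) is a single tree rooted at this atomic token. -/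
/-!
Common BPE formalization preamble.

A token is a (nonempty) string over the alphabet `α`, modeled as `List α`.
A merge rule is a pair of tokens; a dictionary is an ordered list of rules
(earlier rules have strictly higher priority).
-/

namespace BPE

variable {α : Type*} [DecidableEq α]

theorem applyRule_flatten (r : Rule α) (φ : List (Token α)) :
    (applyRule r φ).flatten = φ.flatten := by
  fun_induction applyRule r φ with
  | case1 => rfl
  | case2 t => rfl
  | case3 t u rest h ih => simp [h.1, h.2, ih]
  | case4 t u rest h ih => simp [ih]

theorem applyRule_length (r : Rule α) (φ : List (Token α)) :
    φ.length ≤ 2 * (applyRule r φ).length := by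
  fun_induction applyRule r φ with
  | case1 => simp
  | case2 t => simp
  | case3 t u rest h ih => simp; omega
  | case4 t u rest h ih => simp at ih ⊢; omega

theorem applyRule_ne (r : Rule α) (φ : List (Token α)) (hφ : ∀ t ∈ φ, t ≠ []) :
    ∀ t ∈ applyRule r φ, t ≠ [] := by
  fun_induction applyRule r φ with
  | case1 => simp
  | case2 t => exact hφ
  | case3 t u rest h ih =>
    have ht := hφ t (by simp)
    rw [h.1] at ht
    intro v hv
    rcases List.mem_cons.1 hv with rfl | hv
    · simp [ht]
    · exact ih (fun w hw => hφ w (by simp [hw])) v hv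
  | case4 t u rest h ih =>
    intro v hv
    rcases List.mem_cons.1 hv with rfl | hv
    · exact hφ _ (by simp)
    · exact ih (fun w hw => hφ w (List.mem_cons_of_mem _ hw)) v hv

theorem applyRule_suffix (r : Rule α) (φ : List (Token α)) (B' : List (Token α))
    (h : B' <:+ applyRule r φ) : ∃ B, B <:+ φ ∧ applyRule r B = B' := by
  fun_induction applyRule r φ with
  | case1 =>
    refine ⟨[], List.suffix_rfl, ?_⟩
    simpa [applyRule, eq_comm] using h
  | case2 t =>
    rcases List.suffix_cons_iff.1 h with h | h
    · exact ⟨[t], List.suffix_rfl, by simp [applyRule, h]⟩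
    · refine ⟨[], List.nil_suffix, ?_⟩
      simpa [applyRule, eq_comm] using h
  | case3 t u rest hc ih =>
    rcases List.suffix_cons_iff.1 h with h | h
    · exact ⟨t :: u :: rest, List.suffix_rfl, by rw [applyRule, if_pos hc, h]⟩
    · obtain ⟨B, hB, e⟩ := ih h
      exact ⟨B, (hB.trans (List.suffix_cons _ _)).trans (List.suffix_cons _ _), e⟩
  | case4 t u rest hc ih =>
    rcases List.suffix_cons_iff.1 h with h | h
    · exact ⟨t :: u :: rest, List.suffix_rfl, by rw [applyRule, if_neg hc, h]⟩
    · obtain ⟨B, hB, e⟩ := ih h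
      exact ⟨B, hB.trans (List.suffix_cons _ _), e⟩

theorem phiK_zero (D : Dict α) (s : List α) : phiK D 0 s = phi0 s := rfl

theorem phiK_succ (D : Dict α) (j : ℕ) (hj : j < D.length) (s : List α) :
    phiK D (j + 1) s = applyRule D[j] (phiK D j s) := by
  unfold phiK
  rw [List.take_succ_eq_append_getElem hj, List.foldl_append]
  rfl

theorem phiK_succ_ge (D : Dict α) (j : ℕ) (hj : ¬ j < D.length) (s : List α) :
    phiK D (j + 1) s = phiK D j s := by
  unfold phiK
  rw [List.take_of_length_le (by omega), List.take_of_length_le (by omega)]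

theorem phiK_flatten (D : Dict α) (j : ℕ) (s : List α) : (phiK D j s).flatten = s := by
  induction j with
  | zero => rw [phiK_zero]; unfold phi0; induction s <;> simp_all
  | succ j ih =>
    by_cases hj : j < D.length
    · rw [phiK_succ D j hj, applyRule_flatten, ih]
    · rw [phiK_succ_ge D j hj, ih]

theorem phiK_ne (D : Dict α) (j : ℕ) (s : List α) : ∀ t ∈ phiK D j s, t ≠ [] := by
  induction j with
  | zero => rw [phiK_zero]; simp [phi0]
  | succ j ih =>
    by_cases hj : j < D.length
    · rw [phiK_succ D j hj]; exact applyRule_ne _ _ ih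
    · rw [phiK_succ_ge D j hj]; exact ih

theorem phiK_suffix (D : Dict α) (j : ℕ) (s : List α) (B : List (Token α))
    (h : B <:+ phiK D j s) : phiK D j B.flatten = B := by
  suffices H : ∃ s', phiK D j s' = B by
    obtain ⟨s', e⟩ := H
    have := phiK_flatten D j s'
    rw [e] at this
    rw [this, e]
  induction j generalizing B with
  | zero =>
    rw [phiK_zero] at h
    obtain ⟨A, hA⟩ := h
    obtain ⟨s1, s2, -, -, h2⟩ := List.map_eq_append_iff.1 hA.symm
    exact ⟨s2, h2⟩
  | succ j ih =>
    by_cases hj : j < D.length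
    · rw [phiK_succ D j hj] at h
      obtain ⟨B0, hB0, e⟩ := applyRule_suffix _ _ _ h
      obtain ⟨s', hs⟩ := ih B0 hB0
      exact ⟨s', by rw [phiK_succ D j hj, hs, e]⟩
    · rw [phiK_succ_ge D j hj] at h
      obtain ⟨s', hs⟩ := ih B h
      exact ⟨s', by rw [phiK_succ_ge D j hj, hs]⟩

theorem phiK_stable (D : Dict α) (j i : ℕ) (hij : j ≤ i) (s t : List α)
    (h : phiK D j s = [t]) : phiK D i s = [t] := by
  induction i, hij using Nat.le_induction with
  | base => exact h
  | succ i _ ih =>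
    by_cases hj : i < D.length
    · rw [phiK_succ D i hj, ih]; rfl
    · rw [phiK_succ_ge D i hj, ih]

theorem exists_idx (D : Dict α) (u : Token α) (hu : IsCanonical D u) (hl : 1 < u.length) :
    ∃ j, IsCanonicalRuleIdx D u j := by
  classical
  have hex : ∃ j, phiK D j u = [u] := ⟨D.length, hu⟩
  have hle := Nat.find_min' hex hu
  have hsp := Nat.find_spec hex
  have hmin := fun m => Nat.find_min hex (m := m)
  generalize Nat.find hex = n at *
  cases n with
  | zero =>
    have := congrArg List.length hsp
    simp [phiK_zero, phi0] at this
    omega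
  | succ i =>
    refine ⟨i, by omega, ?_, hsp⟩
    have h1 := hmin i (by omega)
    have hf := phiK_flatten D i u
    rw [phiK_succ D i (by omega)] at hsp
    have h2 := applyRule_length D[i] (phiK D i u)
    rw [hsp] at h2
    match hφ : phiK D i u with
    | [] => rw [hφ] at hf; simp at hf; subst hf; simp at hl
    | [a] => rw [hφ] at hf h1; simp at hf; simp [hf] at h1
    | [a, b] => rfl
    | a :: b :: c :: l => rw [hφ] at h2; simp at h2

theorem suc_props (D : Dict α) (u : Token α) (hu : IsCanonical D u) (hl : 1 < u.length) :
    IsCanonical D (suc D u) ∧ suc D u <:+ u ∧ (suc D u).length < u.length := by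
  have hex := exists_idx D u hu hl
  have hj : IsCanonicalRuleIdx D u (canonIdx D u) := by
    unfold canonIdx
    rw [dif_pos hex]
    exact hex.choose_spec
  unfold suc
  generalize canonIdx D u = j at *
  obtain ⟨hjl, h2, -⟩ := hj
  obtain ⟨x, y, hxy⟩ := List.length_eq_two.1 h2
  have hx := phiK_ne D j u x (by simp [hxy])
  have hf := phiK_flatten D j u
  have hy := phiK_suffix D j u [y] ⟨[x], by simp [hxy]⟩
  simp only [List.flatten_cons, List.flatten_nil, List.append_nil, hxy] at hf hy
  simp only [hxy]
  refine ⟨phiK_stable D j _ hjl.le y y hy, ⟨x, hf⟩, ?_⟩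
  rw [← hf]
  have := List.length_pos_iff.2 hx
  simp only [List.getLastD_cons, List.getLastD_nil, List.length_append]
  omega

theorem phiK_atomic (D : Dict α) (j : ℕ) (c : α) : phiK D j [c] = [[c]] :=
  phiK_stable D 0 j (Nat.zero_le _) _ _ rfl

theorem suc_atomic (D : Dict α) (c : α) : suc D [c] = [c] := by
  unfold suc
  rw [phiK_atomic]
  rfl

theorem canonical_ne_nil (D : Dict α) (u : Token α) (hu : IsCanonical D u) : u ≠ [] :=
  phiK_ne D D.length u u (by
    have h : phiK D D.length u = [u] := hu
    simp [h])

theorem suc_weak (D : Dict α) (u : Token α) (hu : IsCanonical D u) :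
    IsCanonical D (suc D u) ∧ suc D u <:+ u := by
  by_cases hl : 1 < u.length
  · exact ⟨(suc_props D u hu hl).1, (suc_props D u hu hl).2.1⟩
  · have := List.length_pos_iff.2 (canonical_ne_nil D u hu)
    obtain ⟨c, rfl⟩ := List.length_eq_one_iff.1 (show u.length = 1 by omega)
    rw [suc_atomic]
    exact ⟨hu, List.suffix_rfl⟩

theorem iter_props (D : Dict α) (n : ℕ) (u : Token α) (hu : IsCanonical D u) :
    IsCanonical D ((suc D)^[n] u) ∧ (suc D)^[n] u <:+ u := by
  induction n with
  | zero => exact ⟨hu, List.suffix_rfl⟩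
  | succ n ih =>
    rw [Function.iterate_succ_apply']
    have := suc_weak D _ ih.1
    exact ⟨this.1, this.2.trans ih.2⟩

theorem reach (D : Dict α) (k : Token α) (hk : k ≠ []) (m : ℕ) (u : Token α)
    (hm : u.length ≤ m) (hu : IsCanonical D u) (huk : u <:+ k) :
    InPath D u [k.getLast hk] := by
  induction m generalizing u with
  | zero =>
    have := List.length_pos_iff.2 (canonical_ne_nil D u hu)
    omega
  | succ m ih =>
    by_cases hl : 1 < u.length
    · obtain ⟨h1, h2, h3⟩ := suc_props D u hu hl
      obtain ⟨n, hn⟩ := ih (suc D u) (by omega) h1 (h2.trans huk)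
      exact ⟨n + 1, hn⟩
    · have := List.length_pos_iff.2 (canonical_ne_nil D u hu)
      obtain ⟨c, rfl⟩ := List.length_eq_one_iff.1 (show u.length = 1 by omega)
      obtain ⟨A, rfl⟩ := huk
      exact ⟨0, by simp⟩

/-- **Structure of the Suffix-Successor Tree.** Let `k` be a canonical token.
(i) If `u` is a non-atomic canonical suffix of `k`, then `suc u` is a canonical suffix
of `k`. (ii) For every canonical suffix `u` of `k`, every node on the ancestor path
`P(u)` is a canonical suffix of `k`, and the path reaches the unique atomic suffix of
`k` (the single-character token formed by the last character of `k`);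
hence `SufSucTree(k)` is a single tree rooted at this atomic token. -/
theorem sufsuctree_structure [Fintype α] (D : Dict α) (hD : ValidDict D)
    (k : Token α) (hk : k ≠ []) (hkc : IsCanonical D k) :
    (∀ u : Token α, IsCanonical D u → 1 < u.length → u <:+ k →
        IsCanonical D (suc D u) ∧ suc D u <:+ k) ∧
    (∀ u : Token α, IsCanonical D u → u <:+ k →
        (∀ a : Token α, InPath D u a → IsCanonical D a ∧ a <:+ k) ∧
        InPath D u [k.getLast hk]) := by
  refine ⟨fun u hu hl huk => ?_, fun u hu huk => ⟨?_, reach D k hk _ u le_rfl hu huk⟩⟩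
  · obtain ⟨h1, h2, -⟩ := suc_props D u hu hl
    exact ⟨h1, h2.trans huk⟩
  · rintro a ⟨n, rfl⟩
    have := iter_props D n u hu
    exact ⟨this.1, this.2.trans huk⟩

end BPE
end
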